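/- Instability under unweighted L∞ perturbations (Section 4.2): Assume ζ > 0, and let σ₀ ∈ (0,∞), σ₁ ∈ (1,∞). For every sufficiently small ε > 0 there exist R > σ₀ and classical shock front initial data (χ₀,χ₁,N₀) with initial shock front σ₀ such that sup_{s ≥ σ₀} |χ₀′(s) − τ| + sup_{s ≥ σ₀} |χ₁(s) − (ζ(s−σ₀) + σ₁(N₁−τ))| ≤ ε, while the unique classical shock solution with this initial data has maximal existence time T₊ = (N₁ − (τ+ε))/ζ < T(ζ), and for all t ∈ [0,T₊] and s ∈ [2R+t, 3R−t] the stretch satisfies χ_s(s,t) = ζt + τ + ε; in particular, the stretch reaches the inextensibility threshold away from the shock front before time T(ζ). -/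

import Mathlib

open Set Filter Topology

noncomputable section

/-- The uncurried version of a function of two real variables `(s, t)`. -/
def uc (χ : ℝ → ℝ → ℝ) : ℝ × ℝ → ℝ := fun p => χ p.1 p.2

/-- Directional partial derivative of `f` within the set `S` at `p` in direction `v`. -/
def pder (f : ℝ × ℝ → ℝ) (S : Set (ℝ × ℝ)) (v : ℝ × ℝ) (p : ℝ × ℝ) : ℝ :=
  fderivWithin ℝ f S p v

/-- The extensible region `{(s,t) : t ∈ [0,T], s ≥ σ(t)}`. -/
def Ereg (σ : ℝ → ℝ) (T : ℝ) : Set (ℝ × ℝ) :=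
  {p : ℝ × ℝ | p.2 ∈ Icc 0 T ∧ σ p.2 ≤ p.1}

/-- The extensible region for all nonnegative times. -/
def EregInf (σ : ℝ → ℝ) : Set (ℝ × ℝ) :=
  {p : ℝ × ℝ | 0 ≤ p.2 ∧ σ p.2 ≤ p.1}

/-- D'Alembert's solution of the wave equation `χ_tt = χ_ss` with data `(χ₀, χ₁)`. -/
def dAlem (χ₀ χ₁ : ℝ → ℝ) (s t : ℝ) : ℝ :=
  (χ₀ (s + t) + χ₀ (s - t)) / 2 + (∫ ξ in (s - t)..(s + t), χ₁ ξ) / 2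

/-- Classical shock front initial data `(χ₀, χ₁, N₀)` with initial shock front `σ₀`,
threshold tension `N₁`, lower tension bound `η` and tension `ζ t + τ` prescribed at
the infinite end.  One-sided values and derivatives at `σ₀` are taken from the right,
i.e. within `Ici σ₀`. -/
structure IsShockData (N₁ η τ ζ σ₀ : ℝ) (χ₀ χ₁ N₀ : ℝ → ℝ) : Prop where
  sigma0_pos : 0 < σ₀
  chi0_cont : ContinuousOn χ₀ (Ici 0)
  chi1_bdd : ∀ K : ℝ, ∃ M, ∀ s ∈ Icc (0 : ℝ) K, |χ₁ s| ≤ M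
  N0_bdd : ∀ K : ℝ, ∃ M, ∀ s ∈ Icc (0 : ℝ) K, |N₀ s| ≤ M
  chi0_smooth : ContDiffOn ℝ 2 χ₀ (Ici σ₀)
  chi1_smooth : ContDiffOn ℝ 1 χ₁ (Ici σ₀)
  N0_smooth : ContDiffOn ℝ 1 N₀ (Ici σ₀)
  N0_eq : ∀ s ∈ Ici σ₀, N₀ s = derivWithin χ₀ (Ici σ₀) s
  N0_gt : ∀ s ∈ Ici σ₀, η < N₀ s
  N0_lt : ∀ s ∈ Ici σ₀, N₀ s < N₁
  chi0_lim : Tendsto (derivWithin χ₀ (Ici σ₀)) atTop (𝓝 τ)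
  chi1_lim : Tendsto (derivWithin χ₁ (Ici σ₀)) atTop (𝓝 ζ)
  front : χ₀ σ₀ = N₁ * σ₀
  speed : 1 < χ₁ σ₀ / (N₁ - derivWithin χ₀ (Ici σ₀) σ₀)
  inext_chi0 : ∀ s ∈ Icc 0 σ₀, χ₀ s = N₁ * s
  inext_chi1 : ∀ s ∈ Ico 0 σ₀, χ₁ s = 0
  inext_N0 : ∀ s ∈ Ico 0 σ₀,
    N₀ s = N₀ σ₀ + (χ₁ σ₀ / (N₁ - derivWithin χ₀ (Ici σ₀) σ₀)) ^ 2 * (N₁ - N₀ σ₀)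

/-- `(χ, N)` together with the shock front `σ` is a classical shock solution on the
time interval `[0,T]` with initial data `(χ₀, χ₁, N₀)` and initial shock front `σ₀`.
Partial derivatives in the extensible region are taken within `Ereg σ T`, and the
shock speed is `derivWithin σ (Icc 0 T)`. -/
structure IsShockSolution (N₁ η τ ζ σ₀ T : ℝ) (χ₀ χ₁ N₀ : ℝ → ℝ)
    (χ N : ℝ → ℝ → ℝ) (σ : ℝ → ℝ) : Prop where
  chi_cont : ContinuousOn (uc χ) (Ici 0 ×ˢ Icc 0 T)
  chit_bdd : ∀ K : ℝ, ∃ M, ∀ p ∈ Ereg σ T, p.1 ≤ K → |pder (uc χ) (Ereg σ T) (0, 1) p| ≤ M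
  N_bdd : ∀ K : ℝ, ∃ M, ∀ s ∈ Icc (0 : ℝ) K, ∀ t ∈ Icc (0 : ℝ) T, |N s t| ≤ M
  sigma_smooth : ContDiffOn ℝ 2 σ (Icc 0 T)
  sigma_ge : ∀ t ∈ Icc 0 T, σ₀ ≤ σ t
  sigma_init : σ 0 = σ₀
  chi_smooth : ContDiffOn ℝ 2 (uc χ) (Ereg σ T)
  N_smooth : ContDiffOn ℝ 1 (uc N) (Ereg σ T)
  N_eq : ∀ p ∈ Ereg σ T, N p.1 p.2 = pder (uc χ) (Ereg σ T) (1, 0) p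
  N_gt : ∀ p ∈ Ereg σ T, η < N p.1 p.2
  N_lt : ∀ p ∈ Ereg σ T, N p.1 p.2 < N₁
  front : ∀ t ∈ Icc 0 T, χ (σ t) t = N₁ * σ t
  sigma_der : ∀ t ∈ Icc 0 T,
    derivWithin σ (Icc 0 T) t = pder (uc χ) (Ereg σ T) (0, 1) (σ t, t) / (N₁ - N (σ t) t)
  sigma_der_gt : ∀ t ∈ Icc 0 T, 1 < derivWithin σ (Icc 0 T) t
  inext_chi : ∀ t ∈ Icc 0 T, ∀ s ∈ Icc 0 (σ t), χ s t = N₁ * s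
  inext_N : ∀ t ∈ Icc 0 T, ∀ s ∈ Ico 0 (σ t),
    N s t = N (σ t) t + (derivWithin σ (Icc 0 T) t) ^ 2 * (N₁ - N (σ t) t)
  inext_N_gt : ∀ t ∈ Icc 0 T, ∀ s ∈ Ico 0 (σ t), N₁ < N s t
  wave : ∀ p ∈ Ereg σ T,
    pder (pder (uc χ) (Ereg σ T) (0, 1)) (Ereg σ T) (0, 1) p
      = pder (pder (uc χ) (Ereg σ T) (1, 0)) (Ereg σ T) (1, 0) p
  bc_infty : ∀ t ∈ Icc 0 T,
    Tendsto (fun s => pder (uc χ) (Ereg σ T) (1, 0) (s, t)) atTop (𝓝 (ζ * t + τ))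
  init_chi : ∀ s ∈ Ici σ₀, χ s 0 = χ₀ s
  init_chit : ∀ s ∈ Ici σ₀, pder (uc χ) (Ereg σ T) (0, 1) (s, 0) = χ₁ s

/-!
In the extensible region the motion solves the wave equation, hence is a superposition of two
travelling waves; since the front is faster than the characteristic speed `1`, backward
characteristics stay in the region, so the solution is determined there by the data on `s ≥ σ₀`.
Adding to the uniform initial stretch `τ` a plateau of height `ε` far to the right does not change
the front as long as the left-moving half of the plateau has not met it.  On the domain of
dependence of the plateau the stretch is `ζ t + τ + ε`, which reaches the threshold `N₁` at time
`(N₁ - (τ + ε)) / ζ`.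
-/

section Region

variable {σ : ℝ → ℝ} {T : ℝ}

lemma mem_Ereg {s t : ℝ} : (s, t) ∈ Ereg σ T ↔ t ∈ Icc 0 T ∧ σ t ≤ s := Iff.rfl

lemma Ereg_anti {σ' : ℝ → ℝ} (h : ∀ t ∈ Icc 0 T, σ t ≤ σ' t) : Ereg σ' T ⊆ Ereg σ T :=
  fun p hp => ⟨hp.1, (h p.2 hp.1).trans hp.2⟩

lemma convex_Ereg (hσ : ConvexOn ℝ (Icc 0 T) σ) : Convex ℝ (Ereg σ T) :=
  hσ.convex_epigraph.linear_preimage (LinearEquiv.prodComm ℝ ℝ ℝ).toLinearMap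

lemma interior_Ereg_nonempty (hT : 0 < T) (hσ : BddAbove (σ '' Icc 0 T)) :
    (interior (Ereg σ T)).Nonempty := by
  obtain ⟨M, hM⟩ := hσ
  refine ⟨(M + 1, T / 2), interior_maximal ?_ (isOpen_Ioi.prod isOpen_Ioo)
    (⟨by simp, by constructor <;> linarith⟩ : (M + 1, T / 2) ∈ Ioi M ×ˢ Ioo 0 T)⟩
  rintro ⟨s, t⟩ ⟨hs, ht⟩
  exact ⟨Ioo_subset_Icc_self ht, (hM (mem_image_of_mem σ (Ioo_subset_Icc_self ht))).trans hs.le⟩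

/-- A Lipschitz front lies below a cone with vertex at any given point of the region. -/
lemma exists_convex_subset_Ereg (hT : 0 < T) {K : NNReal} (hσ : LipschitzOnWith K σ (Icc 0 T))
    {p : ℝ × ℝ} (hp : p ∈ Ereg σ T) :
    ∃ C ⊆ Ereg σ T, Convex ℝ C ∧ (interior C).Nonempty ∧ p ∈ C := by
  obtain ⟨s, t⟩ := p
  set cone : ℝ → ℝ := fun r => s + K * dist r t with hcone
  refine ⟨Ereg cone T, Ereg_anti fun r hr => ?_, convex_Ereg ?_,
    interior_Ereg_nonempty hT ?_, hp.1, by simp [hcone]⟩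
  · have hdist := hσ.dist_le_mul r hr t hp.1
    have hle : σ r - σ t ≤ dist (σ r) (σ t) := le_abs_self _
    have hst : σ t ≤ s := hp.2
    simp only [hcone]
    linarith
  · exact (((convexOn_dist t (convex_Icc 0 T)).smul K.2).add_const s).congr
      fun r _ => by simp [hcone, add_comm]
  · exact (isCompact_Icc.image (by fun_prop)).bddAbove

lemma uniqueDiffOn_Ereg (hT : 0 < T) {K : NNReal} (hσ : LipschitzOnWith K σ (Icc 0 T)) :
    UniqueDiffOn ℝ (Ereg σ T) := fun p hp => by
  obtain ⟨C, hsub, hconv, hint, hpC⟩ := exists_convex_subset_Ereg hT hσ hp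
  exact (uniqueDiffWithinAt_convex hconv hint (subset_closure hpC)).mono hsub

lemma Ereg_subset_closure_interior (hT : 0 < T) {K : NNReal}
    (hσ : LipschitzOnWith K σ (Icc 0 T)) : Ereg σ T ⊆ closure (interior (Ereg σ T)) := by
  intro p hp
  obtain ⟨C, hsub, hconv, hint, hpC⟩ := exists_convex_subset_Ereg hT hσ hp
  refine closure_mono (interior_mono hsub) ?_
  rw [hconv.closure_interior_eq_closure_of_nonempty_interior hint]
  exact subset_closure hpC

lemma monotoneOn_sub_id_of_one_le_derivWithin (hσ : DifferentiableOn ℝ σ (Icc 0 T))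
    (hspeed : ∀ t ∈ Icc 0 T, 1 ≤ derivWithin σ (Icc 0 T) t) :
    MonotoneOn (fun t => σ t - t) (Icc 0 T) := by
  refine monotoneOn_of_deriv_nonneg (convex_Icc 0 T) (hσ.continuousOn.sub continuousOn_id)
    ((hσ.sub differentiableOn_id).mono interior_subset) fun t ht => ?_
  have hnhds : Icc 0 T ∈ 𝓝 t := mem_interior_iff_mem_nhds.1 ht
  have hd := (hσ t (interior_subset ht)).differentiableAt hnhds
  have hone := hspeed t (interior_subset ht)
  rw [derivWithin_of_mem_nhds hnhds] at hone
  have hderiv : deriv (fun t => σ t - t) t = deriv σ t - 1 :=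
    (hd.hasDerivAt.sub (hasDerivAt_id t)).deriv
  rw [hderiv]
  exact sub_nonneg.2 hone

/-- The front is faster than the unit characteristic speed, so backward characteristics do not
leave the extensible region. -/
lemma add_smul_mem_Ereg (hm : MonotoneOn (fun t => σ t - t) (Icc 0 T)) {s t c r : ℝ}
    (hp : (s, t) ∈ Ereg σ T) (hc : -1 ≤ c) (hr : r ∈ Icc 0 t) :
    (s, t) + r • (c, -1) ∈ Ereg σ T := by
  obtain ⟨ht, hs⟩ := mem_Ereg.1 hp
  have htr : t - r ∈ Icc 0 T := ⟨sub_nonneg.2 hr.2, (sub_le_self t hr.1).trans ht.2⟩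
  have hσr := hm htr ht (sub_le_self t hr.1)
  have hcr : -r ≤ r * c := by nlinarith [hr.1]
  have hpoint : (s, t) + r • (c, -1) = (s + r * c, t - r) := by ext <;> simp [sub_eq_add_neg]
  rw [hpoint, mem_Ereg]
  exact ⟨htr, by linarith⟩

end Region

section PartialDerivatives

variable {f g : ℝ × ℝ → ℝ} {S : Set (ℝ × ℝ)} {p : ℝ × ℝ}

lemma pder_congr (h : EqOn f g S) (hp : p ∈ S) (v : ℝ × ℝ) : pder f S v p = pder g S v p := by
  rw [pder, pder, fderivWithin_congr h (h hp)]

lemma pder_mk (f : ℝ × ℝ → ℝ) (S : Set (ℝ × ℝ)) (p : ℝ × ℝ) (a b : ℝ) :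
    pder f S (a, b) p = a * pder f S (1, 0) p + b * pder f S (0, 1) p := by
  have hv : ((a, b) : ℝ × ℝ) = a • (1, 0) + b • (0, 1) := by ext <;> simp
  simp only [pder, hv, map_add, map_smul, smul_eq_mul]

lemma pder_sub (hS : UniqueDiffWithinAt ℝ S p) (hf : DifferentiableWithinAt ℝ f S p)
    (hg : DifferentiableWithinAt ℝ g S p) (v : ℝ × ℝ) :
    pder (f - g) S v p = pder f S v p - pder g S v p := by
  rw [pder, fderivWithin_sub hS hf hg]
  rfl

lemma hasDerivWithinAt_slice {J : Set ℝ} {s t : ℝ} (hf : DifferentiableWithinAt ℝ f S (s, t))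
    (hJ : ∀ x ∈ J, (x, t) ∈ S) :
    HasDerivWithinAt (fun x => f (x, t)) (pder f S (1, 0) (s, t)) J s :=
  hf.hasFDerivWithinAt.comp_hasDerivWithinAt s
    ((hasDerivWithinAt_id s J).prodMk (hasDerivWithinAt_const s J t)) hJ

lemma differentiableOn_pder (hS : UniqueDiffOn ℝ S) (hf : ContDiffOn ℝ 2 f S) (v : ℝ × ℝ) :
    DifferentiableOn ℝ (pder f S v) S := fun q hq =>
  (((hf.fderivWithin hS (m := 1) (by norm_num)).differentiableOn (by norm_num)) q hq).clm_apply
    (differentiableWithinAt_const v)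

lemma pder_pder (hS : UniqueDiffOn ℝ S) (hf : ContDiffOn ℝ 2 f S) (hp : p ∈ S) (v w : ℝ × ℝ) :
    pder (pder f S v) S w p = fderivWithin ℝ (fderivWithin ℝ f S) S p w v := by
  have hD : DifferentiableOn ℝ (fderivWithin ℝ f S) S :=
    (hf.fderivWithin hS (m := 1) (by norm_num)).differentiableOn (by norm_num)
  have h := fderivWithin_clm_apply (hS p hp) (hD p hp) (differentiableWithinAt_const v)
  change fderivWithin ℝ (fun q => fderivWithin ℝ f S q v) S p w = _
  simp [h]

lemma eq_add_smul_of_pder_eq_zero {v : ℝ × ℝ} {t : ℝ} (ht : 0 ≤ t)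
    (hf : DifferentiableOn ℝ f S) (hseg : ∀ r ∈ Icc 0 t, p + r • v ∈ S)
    (hzero : ∀ q ∈ S, pder f S v q = 0) : f (p + t • v) = f p := by
  have hderiv : ∀ r ∈ Icc 0 t, HasDerivWithinAt (fun r : ℝ => f (p + r • v)) 0 (Icc 0 t) r := by
    intro r hr
    have hline : HasDerivWithinAt (fun r : ℝ => p + r • v) v (Icc 0 t) r := by
      simpa using (((hasDerivAt_id r).smul_const v).const_add p).hasDerivWithinAt
    exact ((hf _ (hseg r hr)).hasFDerivWithinAt.comp_hasDerivWithinAt r hline hseg).congr_deriv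
      (hzero _ (hseg r hr))
  rcases ht.eq_or_lt with rfl | htpos
  · simp
  simpa using constant_of_derivWithin_zero (f := fun r : ℝ => f (p + r • v))
    (fun r hr => (hderiv r hr).differentiableWithinAt)
    (fun r hr => (hderiv r (Ico_subset_Icc_self hr)).derivWithin
      (uniqueDiffOn_Icc htpos r (Ico_subset_Icc_self hr))) t ⟨ht, le_rfl⟩

end PartialDerivatives

section WaveEquation

/-- `u` solves the wave equation `u_tt = u_ss` at every point of `S`, with partial derivatives
taken within `S` as in `IsShockSolution.wave`. -/
def SolvesWave (u : ℝ × ℝ → ℝ) (S : Set (ℝ × ℝ)) : Prop :=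
  ∀ p ∈ S, pder (pder u S (0, 1)) S (0, 1) p = pder (pder u S (1, 0)) S (1, 0) p

/-- The superposition `F (s + t) + G (s - t)` of a left- and a right-moving wave, the general
solution of the wave equation; the Cauchy data of d'Alembert's formula are `χ₀ = F + G` and
`χ₁ = F' - G'`. -/
def travelingWaves (F G : ℝ → ℝ) (s t : ℝ) : ℝ := F (s + t) + G (s - t)

variable {F G : ℝ → ℝ} {S : Set (ℝ × ℝ)} {p : ℝ × ℝ}

lemma contDiff_uc_travelingWaves {n : WithTop ℕ∞} (hF : ContDiff ℝ n F) (hG : ContDiff ℝ n G) :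
    ContDiff ℝ n (uc (travelingWaves F G)) := by
  unfold uc travelingWaves
  fun_prop

lemma hasFDerivAt_uc_travelingWaves (hF : Differentiable ℝ F) (hG : Differentiable ℝ G)
    (p : ℝ × ℝ) :
    HasFDerivAt (uc (travelingWaves F G))
      (deriv F (p.1 + p.2) • (ContinuousLinearMap.fst ℝ ℝ ℝ + ContinuousLinearMap.snd ℝ ℝ ℝ)
        + deriv G (p.1 - p.2) • (ContinuousLinearMap.fst ℝ ℝ ℝ - ContinuousLinearMap.snd ℝ ℝ ℝ))
      p := by
  have hfst : HasFDerivAt Prod.fst (ContinuousLinearMap.fst ℝ ℝ ℝ) p := hasFDerivAt_fst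
  have hsnd : HasFDerivAt Prod.snd (ContinuousLinearMap.snd ℝ ℝ ℝ) p := hasFDerivAt_snd
  exact ((hF (p.1 + p.2)).hasDerivAt.comp_hasFDerivAt p (hfst.add hsnd)).add
    ((hG (p.1 - p.2)).hasDerivAt.comp_hasFDerivAt p (hfst.sub hsnd))

lemma pder_travelingWaves (hS : UniqueDiffWithinAt ℝ S p) (hF : Differentiable ℝ F)
    (hG : Differentiable ℝ G) (v : ℝ × ℝ) :
    pder (uc (travelingWaves F G)) S v p
      = (v.1 + v.2) * deriv F (p.1 + p.2) + (v.1 - v.2) * deriv G (p.1 - p.2) := by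
  rw [pder, (hasFDerivAt_uc_travelingWaves hF hG p).hasFDerivWithinAt.fderivWithin hS]
  simp only [add_apply, sub_apply, smul_apply, smul_eq_mul, ContinuousLinearMap.coe_fst',
    ContinuousLinearMap.coe_snd', mul_comm]

lemma pder_travelingWaves_space (hS : UniqueDiffWithinAt ℝ S p) (hF : Differentiable ℝ F)
    (hG : Differentiable ℝ G) :
    pder (uc (travelingWaves F G)) S (1, 0) p = uc (travelingWaves (deriv F) (deriv G)) p := by
  simp [pder_travelingWaves hS hF hG, uc, travelingWaves]

lemma pder_travelingWaves_time (hS : UniqueDiffWithinAt ℝ S p) (hF : Differentiable ℝ F)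
    (hG : Differentiable ℝ G) :
    pder (uc (travelingWaves F G)) S (0, 1) p = uc (travelingWaves (deriv F) (-deriv G)) p := by
  simp [pder_travelingWaves hS hF hG, uc, travelingWaves]

lemma solvesWave_of_eqOn_travelingWaves {u : ℝ × ℝ → ℝ} (hS : UniqueDiffOn ℝ S)
    (hF : ContDiff ℝ 2 F) (hG : ContDiff ℝ 2 G) (hu : EqOn u (uc (travelingWaves F G)) S) :
    SolvesWave u S := by
  have hF' := hF.differentiable (by norm_num)
  have hG' := hG.differentiable (by norm_num)
  have hF'' : Differentiable ℝ (deriv F) := hF.differentiable_deriv_two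
  have hG'' : Differentiable ℝ (deriv G) := hG.differentiable_deriv_two
  have hspace : EqOn (pder u S (1, 0)) (uc (travelingWaves (deriv F) (deriv G))) S := fun q hq =>
    (pder_congr hu hq _).trans (pder_travelingWaves_space (hS q hq) hF' hG')
  have htime : EqOn (pder u S (0, 1)) (uc (travelingWaves (deriv F) (-deriv G))) S := fun q hq =>
    (pder_congr hu hq _).trans (pder_travelingWaves_time (hS q hq) hF' hG')
  have hneg : deriv (-deriv G) = -deriv (deriv G) := funext fun _ => deriv.neg
  intro p hp
  rw [pder_congr htime hp, pder_congr hspace hp,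
    pder_travelingWaves_time (hS p hp) hF'' hG''.neg,
    pder_travelingWaves_space (hS p hp) hF'' hG'', hneg, neg_neg]

/-- In null coordinates the wave equation says that the mixed second derivative vanishes. -/
lemma SolvesWave.pder_pder_null_eq_zero {u : ℝ × ℝ → ℝ} (hw : SolvesWave u S)
    (hS : UniqueDiffOn ℝ S) (hcl : S ⊆ closure (interior S)) (hu : ContDiffOn ℝ 2 u S)
    (hp : p ∈ S) : pder (pder u S (1, -1)) S (-1, -1) p = 0 := by
  have hsymm : fderivWithin ℝ (fderivWithin ℝ u S) S p (1, 0) (0, 1)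
      = fderivWithin ℝ (fderivWithin ℝ u S) S p (0, 1) (1, 0) :=
    (hu p hp).isSymmSndFDerivWithinAt (by simp) hS (hcl hp) hp _ _
  have hwave := hw p hp
  rw [pder_pder hS hu hp] at hwave ⊢
  rw [pder_pder hS hu hp] at hwave
  have hv : ((1, -1) : ℝ × ℝ) = (1, 0) - (0, 1) := by ext <;> simp
  have hv' : ((-1, -1) : ℝ × ℝ) = -(1, 0) - (0, 1) := by ext <;> simp
  simp only [hv, hv', map_sub, map_neg, sub_apply, neg_apply]
  linarith

end WaveEquation

section Uniqueness

variable {σ F G : ℝ → ℝ} {u : ℝ × ℝ → ℝ} {T : ℝ} {K : NNReal}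

lemma pder_null_eq_of_cauchyData (hT : 0 < T) (hσ : LipschitzOnWith K σ (Icc 0 T))
    (hm : MonotoneOn (fun t => σ t - t) (Icc 0 T)) (hu : ContDiffOn ℝ 2 u (Ereg σ T))
    (hw : SolvesWave u (Ereg σ T)) (hF : Differentiable ℝ F) (hG : Differentiable ℝ G)
    (hu₀ : ∀ x ∈ Ici (σ 0), u (x, 0) = F x + G x)
    (hu₁ : ∀ x ∈ Ici (σ 0), pder u (Ereg σ T) (0, 1) (x, 0) = deriv F x - deriv G x)
    {p : ℝ × ℝ} (hp : p ∈ Ereg σ T) :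
    pder u (Ereg σ T) (1, -1) p = 2 * deriv G (p.1 - p.2) := by
  obtain ⟨s, t⟩ := p
  have hS := uniqueDiffOn_Ereg hT hσ
  have hseg : ∀ r ∈ Icc 0 t, (s, t) + r • (-1, -1) ∈ Ereg σ T := fun r =>
    add_smul_mem_Ereg hm hp le_rfl
  have hfoot : (s, t) + t • ((-1, -1) : ℝ × ℝ) = (s - t, 0) := by ext <;> simp [sub_eq_add_neg]
  have hfootmem : (s - t, (0 : ℝ)) ∈ Ereg σ T := hfoot ▸ hseg t ⟨hp.1.1, le_rfl⟩
  have hconst := eq_add_smul_of_pder_eq_zero hp.1.1 (differentiableOn_pder hS hu (1, -1)) hseg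
    fun q hq => hw.pder_pder_null_eq_zero hS (Ereg_subset_closure_interior hT hσ) hu hq
  have hslice : HasDerivWithinAt (fun x => u (x, 0)) (pder u (Ereg σ T) (1, 0) (s - t, 0))
      (Ici (σ 0)) (s - t) :=
    hasDerivWithinAt_slice (hu.differentiableOn (by norm_num) _ hfootmem)
      fun x hx => ⟨⟨le_rfl, hT.le⟩, hx⟩
  have hspace : pder u (Ereg σ T) (1, 0) (s - t, 0) = deriv F (s - t) + deriv G (s - t) :=
    (uniqueDiffOn_Ici (σ 0) _ hfootmem.2).eq_deriv _ hslice
      (((hF _).hasDerivAt.add (hG _).hasDerivAt).hasDerivWithinAt.congr hu₀ (hu₀ _ hfootmem.2))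
  rw [← hconst, hfoot, pder_mk, hspace, hu₁ _ hfootmem.2]
  ring

theorem eqOn_travelingWaves_of_cauchyData (hT : 0 < T) (hσ : LipschitzOnWith K σ (Icc 0 T))
    (hm : MonotoneOn (fun t => σ t - t) (Icc 0 T)) (hu : ContDiffOn ℝ 2 u (Ereg σ T))
    (hw : SolvesWave u (Ereg σ T)) (hF : Differentiable ℝ F) (hG : Differentiable ℝ G)
    (hu₀ : ∀ x ∈ Ici (σ 0), u (x, 0) = F x + G x)
    (hu₁ : ∀ x ∈ Ici (σ 0), pder u (Ereg σ T) (0, 1) (x, 0) = deriv F x - deriv G x) :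
    EqOn u (uc (travelingWaves F G)) (Ereg σ T) := by
  have hS := uniqueDiffOn_Ereg hT hσ
  have hdu := hu.differentiableOn (by norm_num)
  have hdw : DifferentiableOn ℝ (uc (travelingWaves F G)) (Ereg σ T) := fun q _ =>
    (hasFDerivAt_uc_travelingWaves hF hG q).differentiableAt.differentiableWithinAt
  have hnull : ∀ q ∈ Ereg σ T, pder (u - uc (travelingWaves F G)) (Ereg σ T) (1, -1) q = 0 := by
    intro q hq
    rw [pder_sub (hS q hq) (hdu q hq) (hdw q hq), pder_travelingWaves (hS q hq) hF hG,
      pder_null_eq_of_cauchyData hT hσ hm hu hw hF hG hu₀ hu₁ hq]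
    ring
  rintro ⟨s, t⟩ hp
  have hseg : ∀ r ∈ Icc 0 t, (s, t) + r • (1, -1) ∈ Ereg σ T := fun r =>
    add_smul_mem_Ereg hm hp (by norm_num)
  have hfoot : (s, t) + t • ((1, -1) : ℝ × ℝ) = (s + t, 0) := by ext <;> simp
  have hfootmem : (s + t, (0 : ℝ)) ∈ Ereg σ T := hfoot ▸ hseg t ⟨hp.1.1, le_rfl⟩
  have hconst := eq_add_smul_of_pder_eq_zero hp.1.1 (hdu.sub hdw) hseg hnull
  rw [hfoot] at hconst
  refine sub_eq_zero.1 (hconst.symm.trans (sub_eq_zero.2 ?_))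
  simpa [uc, travelingWaves] using hu₀ _ hfootmem.2

end Uniqueness

section ShockSolution

variable {N₁ η τ ζ σ₀ T : ℝ} {χ₀ χ₁ N₀ σ F G : ℝ → ℝ} {χ N : ℝ → ℝ → ℝ}

lemma IsShockSolution.monotoneOn_front_sub_id
    (h : IsShockSolution N₁ η τ ζ σ₀ T χ₀ χ₁ N₀ χ N σ) :
    MonotoneOn (fun t => σ t - t) (Icc 0 T) :=
  monotoneOn_sub_id_of_one_le_derivWithin (h.sigma_smooth.differentiableOn (by norm_num))
    fun t ht => (h.sigma_der_gt t ht).le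

lemma IsShockSolution.exists_lipschitzOnWith_front
    (h : IsShockSolution N₁ η τ ζ σ₀ T χ₀ χ₁ N₀ χ N σ) :
    ∃ K, LipschitzOnWith K σ (Icc 0 T) :=
  h.sigma_smooth.exists_lipschitzOnWith (by norm_num) (convex_Icc 0 T) isCompact_Icc

theorem IsShockSolution.eqOn_motion (h : IsShockSolution N₁ η τ ζ σ₀ T χ₀ χ₁ N₀ χ N σ)
    (hT : 0 < T) (hF : Differentiable ℝ F) (hG : Differentiable ℝ G)
    (hχ₀ : EqOn χ₀ (F + G) (Ici σ₀)) (hχ₁ : EqOn χ₁ (deriv F - deriv G) (Ici σ₀)) :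
    EqOn (uc χ) (uc (travelingWaves F G)) (Ereg σ T) := by
  obtain ⟨K, hσ⟩ := h.exists_lipschitzOnWith_front
  refine eqOn_travelingWaves_of_cauchyData hT hσ h.monotoneOn_front_sub_id h.chi_smooth h.wave
    hF hG ?_ ?_ <;> rw [h.sigma_init]
  · exact fun x hx => (h.init_chi x hx).trans (hχ₀ hx)
  · exact fun x hx => (h.init_chit x hx).trans (hχ₁ hx)

theorem IsShockSolution.eqOn_tension (h : IsShockSolution N₁ η τ ζ σ₀ T χ₀ χ₁ N₀ χ N σ)
    (hT : 0 < T) (hF : Differentiable ℝ F) (hG : Differentiable ℝ G)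
    (hχ₀ : EqOn χ₀ (F + G) (Ici σ₀)) (hχ₁ : EqOn χ₁ (deriv F - deriv G) (Ici σ₀)) :
    EqOn (uc N) (uc (travelingWaves (deriv F) (deriv G))) (Ereg σ T) := fun p hp => by
  obtain ⟨K, hσ⟩ := h.exists_lipschitzOnWith_front
  refine (h.N_eq p hp).trans ?_
  rw [pder_congr (h.eqOn_motion hT hF hG hχ₀ hχ₁) hp,
    pder_travelingWaves_space (uniqueDiffOn_Ereg hT hσ p hp) hF hG]

end ShockSolution

section GlueAlong

/-- The function equal to `L` behind the curve `s = σ t` and to `R` on the curve and ahead of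
it. -/
def glueAlong (σ : ℝ → ℝ) (L R : ℝ → ℝ → ℝ) (s t : ℝ) : ℝ := if s < σ t then L s t else R s t

variable {σ : ℝ → ℝ} {L R : ℝ → ℝ → ℝ} {s t T : ℝ}

lemma glueAlong_of_lt (h : s < σ t) : glueAlong σ L R s t = L s t := if_pos h

lemma glueAlong_of_le (h : σ t ≤ s) : glueAlong σ L R s t = R s t := if_neg h.not_gt

lemma eqOn_uc_glueAlong : EqOn (uc (glueAlong σ L R)) (uc R) (Ereg σ T) :=
  fun _ hp => glueAlong_of_le hp.2

lemma glueAlong_of_ge (hLR : L (σ t) t = R (σ t) t) (h : s ≤ σ t) :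
    glueAlong σ L R s t = L s t := by
  rcases h.eq_or_lt with rfl | hlt
  · rw [glueAlong_of_le le_rfl, hLR]
  · exact glueAlong_of_lt hlt

lemma exists_abs_glueAlong_le {S : Set (ℝ × ℝ)} (hS : IsCompact S) (hL : ContinuousOn (uc L) S)
    (hR : ContinuousOn (uc R) S) : ∃ M, ∀ p ∈ S, |glueAlong σ L R p.1 p.2| ≤ M := by
  obtain ⟨A, hA⟩ := hS.exists_bound_of_continuousOn hL
  obtain ⟨B, hB⟩ := hS.exists_bound_of_continuousOn hR
  refine ⟨max A B, fun p hp => ?_⟩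
  rcases lt_or_ge p.1 (σ p.2) with h | h
  · exact (congrArg abs (glueAlong_of_lt h)).trans_le ((hA p hp).trans (le_max_left A B))
  · exact (congrArg abs (glueAlong_of_le h)).trans_le ((hB p hp).trans (le_max_right A B))

lemma continuousOn_uc_glueAlong {I J : Set ℝ} (hI : IsClosed I) (hJ : IsClosed J)
    (hσ : ContinuousOn σ I) (hL : ContinuousOn (uc L) (J ×ˢ I)) (hR : ContinuousOn (uc R) (J ×ˢ I))
    (hLR : ∀ t ∈ I, L (σ t) t = R (σ t) t) : ContinuousOn (uc (glueAlong σ L R)) (J ×ˢ I) := by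
  have hfront : ContinuousOn (fun p : ℝ × ℝ => σ p.2) (J ×ˢ I) :=
    hσ.comp continuousOn_snd fun p hp => hp.2
  have hclosed : IsClosed (J ×ˢ I) := hJ.prod hI
  have hbehind : ContinuousOn (uc (glueAlong σ L R)) {p ∈ J ×ˢ I | p.1 ≤ σ p.2} :=
    (hL.mono (sep_subset _ _)).congr fun p hp => glueAlong_of_ge (hLR p.2 hp.1.2) hp.2
  have hahead : ContinuousOn (uc (glueAlong σ L R)) {p ∈ J ×ˢ I | σ p.2 ≤ p.1} :=
    (hR.mono (sep_subset _ _)).congr fun p hp => glueAlong_of_le hp.2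
  refine (hbehind.union_of_isClosed hahead (hclosed.isClosed_le continuousOn_fst hfront)
    (hclosed.isClosed_le hfront continuousOn_fst)).mono fun p hp => ?_
  exact (le_total p.1 (σ p.2)).imp (⟨hp, ·⟩) (⟨hp, ·⟩)

end GlueAlong

section FrontedWave

/-- The motion that is inextensible with maximal stretch `N₁` behind the front `σ` and a
superposition of travelling waves ahead of it. -/
def frontMotion (N₁ : ℝ) (F G σ : ℝ → ℝ) : ℝ → ℝ → ℝ :=
  glueAlong σ (fun s _ => N₁ * s) (travelingWaves F G)

/-- The velocity field of `frontMotion`. -/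
def frontVelocity (F G σ : ℝ → ℝ) : ℝ → ℝ → ℝ :=
  glueAlong σ 0 (travelingWaves (deriv F) (-deriv G))

/-- The tension of the inextensible region behind the front of `frontMotion`, which is constant in
space and prescribed by the jump condition for momentum across the front. -/
def tensionBehindFront (N₁ : ℝ) (F G σ : ℝ → ℝ) (t : ℝ) : ℝ :=
  travelingWaves (deriv F) (deriv G) (σ t) t
    + deriv σ t ^ 2 * (N₁ - travelingWaves (deriv F) (deriv G) (σ t) t)

/-- The tension of `frontMotion`; ahead of the front it equals the stretch. -/
def frontTension (N₁ : ℝ) (F G σ : ℝ → ℝ) : ℝ → ℝ → ℝ :=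
  glueAlong σ (fun _ => tensionBehindFront N₁ F G σ) (travelingWaves (deriv F) (deriv G))

lemma deriv_frontMotion {N₁ : ℝ} {F G σ : ℝ → ℝ} (hF : Differentiable ℝ F) (hG : Differentiable ℝ G)
    {s t : ℝ} (hs : σ t < s) :
    deriv (frontMotion N₁ F G σ · t) s = travelingWaves (deriv F) (deriv G) s t := by
  have hahead : (frontMotion N₁ F G σ · t) =ᶠ[𝓝 s] (travelingWaves F G · t) :=
    (lt_mem_nhds hs).mono fun x hx => glueAlong_of_le hx.le
  have hwave : HasDerivAt (travelingWaves F G · t) (deriv F (s + t) + deriv G (s - t)) s :=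
    ((hF _).hasDerivAt.comp_add_const s t).add ((hG _).hasDerivAt.comp_sub_const s t)
  exact hahead.deriv_eq.trans hwave.deriv

lemma eqOn_frontMotion_zero {N₁ σ₀ : ℝ} {F G σ : ℝ → ℝ} (hσ₀ : σ 0 = σ₀) :
    EqOn (frontMotion N₁ F G σ · 0) (F + G) (Ici σ₀) := fun s hs => by
  simp [frontMotion, glueAlong_of_le (hσ₀.trans_le hs), travelingWaves]

lemma eqOn_frontVelocity_zero {σ₀ : ℝ} {F G σ : ℝ → ℝ} (hσ₀ : σ 0 = σ₀) :
    EqOn (frontVelocity F G σ · 0) (deriv F - deriv G) (Ici σ₀) := fun s hs => by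
  simp [frontVelocity, glueAlong_of_le (hσ₀.trans_le hs), travelingWaves, sub_eq_add_neg]

/-- The conditions on the profiles `F`, `G` and on the front `σ` under which the fields
`frontMotion` and `frontTension` form a classical shock solution on `[0, T]`. -/
structure IsFrontedWave (N₁ η τ ζ T : ℝ) (F G σ : ℝ → ℝ) : Prop where
  time_pos : 0 < T
  contDiff_left : ContDiff ℝ 2 F
  contDiff_right : ContDiff ℝ 2 G
  contDiffAt_front : ∀ t ∈ Icc 0 T, ContDiffAt ℝ 2 σ t
  front_eq : ∀ t ∈ Icc 0 T, travelingWaves F G (σ t) t = N₁ * σ t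
  one_lt_speed : ∀ t ∈ Icc 0 T, 1 < deriv σ t
  stretch_mem : ∀ p ∈ Ereg σ T, uc (travelingWaves (deriv F) (deriv G)) p ∈ Ioo η N₁
  tendsto_stretch : ∀ t ∈ Icc 0 T,
    Tendsto (fun s => travelingWaves (deriv F) (deriv G) s t) atTop (𝓝 (ζ * t + τ))

namespace IsFrontedWave

variable {N₁ η τ ζ T : ℝ} {F G σ : ℝ → ℝ} (h : IsFrontedWave N₁ η τ ζ T F G σ)
include h

lemma differentiable_left : Differentiable ℝ F := h.contDiff_left.differentiable (by norm_num)

lemma differentiable_right : Differentiable ℝ G := h.contDiff_right.differentiable (by norm_num)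

lemma contDiff_stretch : ContDiff ℝ 1 (uc (travelingWaves (deriv F) (deriv G))) :=
  contDiff_uc_travelingWaves h.contDiff_left.deriv' h.contDiff_right.deriv'

lemma contDiff_velocity : ContDiff ℝ 1 (uc (travelingWaves (deriv F) (-deriv G))) :=
  contDiff_uc_travelingWaves h.contDiff_left.deriv' h.contDiff_right.deriv'.neg

lemma contDiffOn_front : ContDiffOn ℝ 2 σ (Icc 0 T) := fun t ht =>
  (h.contDiffAt_front t ht).contDiffWithinAt

lemma hasDerivAt_front {t : ℝ} (ht : t ∈ Icc 0 T) : HasDerivAt σ (deriv σ t) t :=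
  ((h.contDiffAt_front t ht).differentiableAt (by norm_num)).hasDerivAt

lemma derivWithin_front {t : ℝ} (ht : t ∈ Icc 0 T) : derivWithin σ (Icc 0 T) t = deriv σ t :=
  (h.hasDerivAt_front ht).hasDerivWithinAt.derivWithin (uniqueDiffOn_Icc h.time_pos t ht)

lemma continuousOn_deriv_front : ContinuousOn (deriv σ) (Icc 0 T) :=
  (h.contDiffOn_front.continuousOn_derivWithin (uniqueDiffOn_Icc h.time_pos) (by norm_num)).congr
    fun _ ht => (h.derivWithin_front ht).symm

lemma uniqueDiffOn : UniqueDiffOn ℝ (Ereg σ T) := by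
  obtain ⟨K, hK⟩ :=
    h.contDiffOn_front.exists_lipschitzOnWith (by norm_num) (convex_Icc 0 T) isCompact_Icc
  exact uniqueDiffOn_Ereg h.time_pos hK

lemma front_zero_le {t : ℝ} (ht : t ∈ Icc 0 T) : σ 0 ≤ σ t := by
  have hm := monotoneOn_sub_id_of_one_le_derivWithin
    (h.contDiffOn_front.differentiableOn (by norm_num))
    fun r hr => (h.derivWithin_front hr).symm ▸ (h.one_lt_speed r hr).le
  have hle : σ 0 - 0 ≤ σ t - t := hm (left_mem_Icc.2 h.time_pos.le) ht ht.1
  linarith [ht.1]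

lemma pder_motion_space {p : ℝ × ℝ} (hp : p ∈ Ereg σ T) :
    pder (uc (frontMotion N₁ F G σ)) (Ereg σ T) (1, 0) p
      = uc (travelingWaves (deriv F) (deriv G)) p :=
  (pder_congr eqOn_uc_glueAlong hp _).trans <|
    pder_travelingWaves_space (h.uniqueDiffOn p hp) h.differentiable_left h.differentiable_right

lemma pder_motion_time {p : ℝ × ℝ} (hp : p ∈ Ereg σ T) :
    pder (uc (frontMotion N₁ F G σ)) (Ereg σ T) (0, 1) p
      = uc (travelingWaves (deriv F) (-deriv G)) p :=
  (pder_congr eqOn_uc_glueAlong hp _).trans <|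
    pder_travelingWaves_time (h.uniqueDiffOn p hp) h.differentiable_left h.differentiable_right

lemma speed_eq {t : ℝ} (ht : t ∈ Icc 0 T) :
    deriv σ t = travelingWaves (deriv F) (-deriv G) (σ t) t
      / (N₁ - travelingWaves (deriv F) (deriv G) (σ t) t) := by
  have hσ := h.hasDerivAt_front ht
  have hleft : HasDerivAt (fun r => travelingWaves F G (σ r) r)
      (deriv F (σ t + t) * (deriv σ t + 1) + deriv G (σ t - t) * (deriv σ t - 1)) t :=
    ((h.differentiable_left _).hasDerivAt.comp t (hσ.add (hasDerivAt_id t))).add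
      ((h.differentiable_right _).hasDerivAt.comp t (hσ.sub (hasDerivAt_id t)))
  have hright : HasDerivWithinAt (fun r => travelingWaves F G (σ r) r) (N₁ * deriv σ t)
      (Icc 0 T) t :=
    (hσ.const_mul N₁).hasDerivWithinAt.congr h.front_eq (h.front_eq t ht)
  have heq := (uniqueDiffOn_Icc h.time_pos t ht).eq_deriv _ hleft.hasDerivWithinAt hright
  have hgap : 0 < N₁ - travelingWaves (deriv F) (deriv G) (σ t) t :=
    sub_pos.2 (h.stretch_mem (σ t, t) ⟨ht, le_rfl⟩).2
  rw [eq_div_iff hgap.ne']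
  simp only [travelingWaves, Pi.neg_apply]
  linear_combination -heq

lemma continuousOn_motion : ContinuousOn (uc (frontMotion N₁ F G σ)) (Ici 0 ×ˢ Icc 0 T) :=
  continuousOn_uc_glueAlong isClosed_Icc isClosed_Ici h.contDiffOn_front.continuousOn
    (by unfold uc; fun_prop)
    (contDiff_uc_travelingWaves h.contDiff_left h.contDiff_right).continuous.continuousOn
    fun t ht => (h.front_eq t ht).symm

lemma continuousOn_tensionBehindFront :
    ContinuousOn (tensionBehindFront N₁ F G σ) (Icc 0 T) := by
  have hstretch : ContinuousOn (fun t => travelingWaves (deriv F) (deriv G) (σ t) t) (Icc 0 T) :=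
    h.contDiff_stretch.continuous.comp_continuousOn
      (h.contDiffOn_front.continuousOn.prodMk continuousOn_id)
  exact hstretch.add
    ((h.continuousOn_deriv_front.pow 2).mul ((continuousOn_const (c := N₁)).sub hstretch))

lemma lt_tensionBehindFront {t : ℝ} (ht : t ∈ Icc 0 T) : N₁ < tensionBehindFront N₁ F G σ t := by
  have hstretch : travelingWaves (deriv F) (deriv G) (σ t) t < N₁ :=
    (h.stretch_mem (σ t, t) ⟨ht, le_rfl⟩).2
  have hspeed : 1 < deriv σ t ^ 2 := one_lt_pow₀ (h.one_lt_speed t ht) two_ne_zero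
  rw [tensionBehindFront]
  nlinarith

lemma exists_abs_tension_le (K : ℝ) : ∃ M, ∀ s ∈ Icc 0 K, ∀ t ∈ Icc 0 T,
    |frontTension N₁ F G σ s t| ≤ M := by
  obtain ⟨M, hM⟩ := exists_abs_glueAlong_le (σ := σ) (L := fun _ => tensionBehindFront N₁ F G σ)
    (S := Icc 0 K ×ˢ Icc 0 T) (isCompact_Icc.prod isCompact_Icc)
    (h.continuousOn_tensionBehindFront.comp continuousOn_snd fun p hp => hp.2)
    h.contDiff_stretch.continuous.continuousOn
  exact ⟨M, fun s hs t ht => hM (s, t) ⟨hs, ht⟩⟩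

lemma exists_abs_velocity_le (K : ℝ) : ∃ M, ∀ s ∈ Icc 0 K, |frontVelocity F G σ s 0| ≤ M := by
  obtain ⟨M, hM⟩ := exists_abs_glueAlong_le (σ := σ) (L := 0) (S := Icc 0 K ×ˢ {0})
    (isCompact_Icc.prod isCompact_singleton) continuousOn_const
    h.contDiff_velocity.continuous.continuousOn
  exact ⟨M, fun s hs => hM (s, 0) ⟨hs, mem_singleton 0⟩⟩

lemma exists_abs_pder_motion_time_le (K : ℝ) : ∃ M, ∀ p ∈ Ereg σ T, p.1 ≤ K →
    |pder (uc (frontMotion N₁ F G σ)) (Ereg σ T) (0, 1) p| ≤ M := by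
  obtain ⟨M, hM⟩ := (isCompact_Icc.prod isCompact_Icc).exists_bound_of_continuousOn
    (s := Icc (σ 0) K ×ˢ Icc 0 T) h.contDiff_velocity.continuous.continuousOn
  refine ⟨M, fun p hp hpK => ?_⟩
  rw [h.pder_motion_time hp]
  exact hM p ⟨⟨(h.front_zero_le hp.1).trans hp.2, hpK⟩, hp.1⟩

lemma tension_mem {p : ℝ × ℝ} (hp : p ∈ Ereg σ T) :
    frontTension N₁ F G σ p.1 p.2 ∈ Ioo η N₁ := by
  rw [frontTension, glueAlong_of_le hp.2]
  exact h.stretch_mem p hp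

theorem isShockSolution {σ₀ : ℝ} (hσ₀ : σ 0 = σ₀) :
    IsShockSolution N₁ η τ ζ σ₀ T (frontMotion N₁ F G σ · 0) (frontVelocity F G σ · 0)
      (frontTension N₁ F G σ · 0) (frontMotion N₁ F G σ) (frontTension N₁ F G σ) σ := by
  subst hσ₀
  exact
  { chi_cont := h.continuousOn_motion
    chit_bdd := h.exists_abs_pder_motion_time_le
    N_bdd := h.exists_abs_tension_le
    sigma_smooth := h.contDiffOn_front
    sigma_ge := fun t ht => h.front_zero_le ht
    sigma_init := rfl
    chi_smooth := (contDiff_uc_travelingWaves h.contDiff_left h.contDiff_right).contDiffOn.congr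
      eqOn_uc_glueAlong
    N_smooth := h.contDiff_stretch.contDiffOn.congr eqOn_uc_glueAlong
    N_eq := fun p hp => (eqOn_uc_glueAlong hp).trans (h.pder_motion_space hp).symm
    N_gt := fun p hp => (h.tension_mem hp).1
    N_lt := fun p hp => (h.tension_mem hp).2
    front := fun t ht => (glueAlong_of_le le_rfl).trans (h.front_eq t ht)
    sigma_der := fun t ht => by
      rw [h.derivWithin_front ht, h.speed_eq ht, h.pder_motion_time ⟨ht, le_rfl⟩,
        frontTension, glueAlong_of_le le_rfl]
      rfl
    sigma_der_gt := fun t ht => (h.derivWithin_front ht).symm ▸ h.one_lt_speed t ht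
    inext_chi := fun t ht s hs => glueAlong_of_ge (h.front_eq t ht).symm hs.2
    inext_N := fun t ht s hs => by
      rw [h.derivWithin_front ht, frontTension, glueAlong_of_lt hs.2, glueAlong_of_le le_rfl]
      rfl
    inext_N_gt := fun t ht s hs => by
      rw [frontTension, glueAlong_of_lt hs.2]
      exact h.lt_tensionBehindFront ht
    wave := solvesWave_of_eqOn_travelingWaves h.uniqueDiffOn h.contDiff_left h.contDiff_right
      eqOn_uc_glueAlong
    bc_infty := fun t ht => (h.tendsto_stretch t ht).congr' <|
      (eventually_ge_atTop (σ t)).mono fun s hs => (h.pder_motion_space ⟨ht, hs⟩).symm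
    init_chi := fun _ _ => rfl
    init_chit := fun s hs =>
      (h.pder_motion_time (p := (s, 0)) ⟨left_mem_Icc.2 h.time_pos.le, hs⟩).trans
        (glueAlong_of_le hs).symm }

lemma derivWithin_initial_motion {σ₀ s : ℝ} (hσ₀ : σ 0 = σ₀) (hs : s ∈ Ici σ₀) :
    derivWithin (frontMotion N₁ F G σ · 0) (Ici σ₀) s
      = travelingWaves (deriv F) (deriv G) s 0 := by
  subst hσ₀
  have h0 : (0 : ℝ) ∈ Icc 0 T := left_mem_Icc.2 h.time_pos.le
  have hdiff := (h.isShockSolution rfl).chi_smooth.differentiableOn (by norm_num) (s, 0) ⟨h0, hs⟩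
  exact ((hasDerivWithinAt_slice hdiff fun x hx => ⟨h0, hx⟩).derivWithin
    (uniqueDiffOn_Ici (σ 0) s hs)).trans (h.pder_motion_space (p := (s, 0)) ⟨h0, hs⟩)

lemma initial_speed_eq : deriv σ 0 = frontVelocity F G σ (σ 0) 0
    / (N₁ - derivWithin (frontMotion N₁ F G σ · 0) (Ici (σ 0)) (σ 0)) := by
  rw [h.speed_eq (left_mem_Icc.2 h.time_pos.le), h.derivWithin_initial_motion rfl self_mem_Ici,
    frontVelocity, glueAlong_of_le le_rfl]

theorem isShockData {σ₀ : ℝ} (hσ₀ : σ 0 = σ₀) (hpos : 0 < σ₀)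
    (hlim : Tendsto (deriv (deriv F - deriv G)) atTop (𝓝 ζ)) :
    IsShockData N₁ η τ ζ σ₀ (frontMotion N₁ F G σ · 0) (frontVelocity F G σ · 0)
      (frontTension N₁ F G σ · 0) := by
  subst hσ₀
  have h0 : (0 : ℝ) ∈ Icc 0 T := left_mem_Icc.2 h.time_pos.le
  have hsol := h.isShockSolution rfl
  have hslice : ContDiff ℝ 2 fun s : ℝ => (s, (0 : ℝ)) := by fun_prop
  have hmaps : MapsTo (fun s : ℝ => (s, (0 : ℝ))) (Ici (σ 0)) (Ereg σ T) := fun s hs => ⟨h0, hs⟩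
  exact
  { sigma0_pos := hpos
    chi0_cont := hsol.chi_cont.comp (f := fun s => (s, (0 : ℝ))) (by fun_prop)
      fun s hs => ⟨hs, h0⟩
    chi1_bdd := h.exists_abs_velocity_le
    N0_bdd := fun K => (h.exists_abs_tension_le K).imp fun M hM s hs => hM s hs 0 h0
    chi0_smooth := hsol.chi_smooth.comp hslice.contDiffOn hmaps
    chi1_smooth := (h.contDiff_left.deriv'.sub h.contDiff_right.deriv').contDiffOn.congr
      (eqOn_frontVelocity_zero rfl)
    N0_smooth := hsol.N_smooth.comp (hslice.of_le (by norm_num)).contDiffOn hmaps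
    N0_eq := fun s hs => (glueAlong_of_le hs).trans (h.derivWithin_initial_motion rfl hs).symm
    N0_gt := fun s hs => hsol.N_gt (s, 0) ⟨h0, hs⟩
    N0_lt := fun s hs => hsol.N_lt (s, 0) ⟨h0, hs⟩
    chi0_lim := by
      have hstretch := h.tendsto_stretch 0 h0
      rw [mul_zero, zero_add] at hstretch
      exact hstretch.congr' ((eventually_ge_atTop (σ 0)).mono fun s hs =>
        (h.derivWithin_initial_motion rfl hs).symm)
    chi1_lim := hlim.congr' <| (eventually_gt_atTop (σ 0)).mono fun s hs => by
      rw [derivWithin_congr (eqOn_frontVelocity_zero rfl) (eqOn_frontVelocity_zero rfl hs.le),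
        derivWithin_of_mem_nhds (Ici_mem_nhds hs)]
    front := hsol.front 0 h0
    speed := h.initial_speed_eq ▸ h.one_lt_speed 0 h0
    inext_chi0 := hsol.inext_chi 0 h0
    inext_chi1 := fun s hs => glueAlong_of_lt hs.2
    inext_N0 := fun s hs => by
      rw [← h.initial_speed_eq, ← h.derivWithin_front h0]
      exact hsol.inext_N 0 h0 s hs }

end IsFrontedWave

end FrontedWave

section BumpPrimitive

variable {c : ℝ} (f : ContDiffBump c)

/-- The primitive of a bump function that vanishes to the left of its support. -/
def bumpPrimitive (s : ℝ) : ℝ := ∫ x in (c - f.rOut)..s, f x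

lemma hasDerivAt_bumpPrimitive (s : ℝ) : HasDerivAt (bumpPrimitive f) (f s) s :=
  (f.continuous.integral_hasStrictDerivAt (c - f.rOut) s).hasDerivAt

lemma contDiff_bumpPrimitive {n : ℕ∞} : ContDiff ℝ n (bumpPrimitive f) := by
  have htop : ContDiff ℝ (⊤ : ℕ∞) (bumpPrimitive f) := by
    refine contDiff_infty_iff_deriv.2
      ⟨fun s => (hasDerivAt_bumpPrimitive f s).differentiableAt, ?_⟩
    rw [funext fun s => (hasDerivAt_bumpPrimitive f s).deriv]
    exact f.contDiff
  exact htop.of_le (by exact_mod_cast le_top)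

lemma bumpPrimitive_of_le {s : ℝ} (hs : s ≤ c - f.rOut) : bumpPrimitive f s = 0 := by
  refine (intervalIntegral.integral_congr fun x hx => ?_).trans intervalIntegral.integral_zero
  rw [uIcc_of_ge hs] at hx
  refine f.zero_of_le_dist ?_
  rw [dist_comm, Real.dist_eq]
  exact (le_sub_comm.1 hx.2).trans (le_abs_self _)

lemma bumpPrimitive_le {s : ℝ} (hs : c - f.rOut ≤ s) : bumpPrimitive f s ≤ s - (c - f.rOut) :=
  (intervalIntegral.integral_mono_on hs (f.continuous.intervalIntegrable _ _)
    intervalIntegrable_const fun _ _ => f.le_one).trans_eq (by simp)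

lemma eventually_bump_add_eq_zero (t : ℝ) : ∀ᶠ s in atTop, f (s + t) = 0 := by
  filter_upwards [eventually_ge_atTop (c + f.rOut - t)] with s hs
  refine f.zero_of_le_dist ?_
  rw [Real.dist_eq]
  exact (by linarith : f.rOut ≤ s + t - c).trans (le_abs_self _)

lemma exists_far_bump {a P : ℝ} (ha : 0 < a) (hP : 0 ≤ P) :
    ∃ R, a < R ∧ ∃ f : ContDiffBump (5 * R / 2),
      f.rIn = R / 2 ∧ a + P ≤ 5 * R / 2 - f.rOut ∧ P ≤ f.rIn := by
  obtain ⟨R, hR⟩ := exists_gt (a + 2 * P)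
  exact ⟨R, by linarith, ⟨R / 2, 3 * R / 2, by linarith, by linarith⟩, rfl,
    show a + P ≤ 5 * R / 2 - 3 * R / 2 by linarith, show P ≤ R / 2 by linarith⟩

end BumpPrimitive

section Plateau

variable (N₁ τ ζ σ₀ v ε : ℝ) {c : ℝ} (f : ContDiffBump c)

/-- The left-moving (`k = 1`) and right-moving (`k = -1`) profiles of the wave with initial
position `N₁ * σ₀` and initial velocity `v` at `σ₀`, initial stretch `τ + ε * f` and constant
initial strain rate `ζ`. -/
def plateauWave (k s : ℝ) : ℝ :=
  (N₁ * σ₀ + (τ + k * v) * (s - σ₀) + k * ζ * (s - σ₀) ^ 2 / 2 + ε * bumpPrimitive f s) / 2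

/-- The front of the shock solution with uniform initial stretch `τ`, obtained by solving
`N₁ * σ t = N₁ * σ₀ + (τ + ζ * t) * (σ t - σ₀) + v * t` for `σ t`. -/
def uniformFront (t : ℝ) : ℝ := σ₀ + v * t / (N₁ - τ - ζ * t)

lemma contDiff_plateauWave (k : ℝ) : ContDiff ℝ 2 (plateauWave N₁ τ ζ σ₀ v ε f k) := by
  have hbump : ContDiff ℝ 2 (bumpPrimitive f) := contDiff_bumpPrimitive f (n := 2)
  unfold plateauWave
  fun_prop

lemma deriv_plateauWave (k : ℝ) : deriv (plateauWave N₁ τ ζ σ₀ v ε f k)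
    = fun s => (τ + k * v + k * ζ * (s - σ₀) + ε * f s) / 2 := funext fun s => by
  have hlin : HasDerivAt (fun x => x - σ₀) 1 s := (hasDerivAt_id s).sub_const σ₀
  refine HasDerivAt.deriv <| (((((hlin.const_mul (τ + k * v)).const_add (N₁ * σ₀)).add
    (((hlin.pow 2).const_mul (k * ζ)).div_const 2)).add
    ((hasDerivAt_bumpPrimitive f s).const_mul ε)).div_const 2).congr_deriv ?_
  simp only [Nat.cast_ofNat]
  ring

lemma travelingWaves_plateauWave (s t : ℝ) :
    travelingWaves (plateauWave N₁ τ ζ σ₀ v ε f 1) (plateauWave N₁ τ ζ σ₀ v ε f (-1)) s t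
      = N₁ * σ₀ + (τ + ζ * t) * (s - σ₀) + v * t
        + ε * ((bumpPrimitive f (s + t) + bumpPrimitive f (s - t)) / 2) := by
  simp only [travelingWaves, plateauWave]
  ring

lemma travelingWaves_deriv_plateauWave (s t : ℝ) :
    travelingWaves (deriv (plateauWave N₁ τ ζ σ₀ v ε f 1))
        (deriv (plateauWave N₁ τ ζ σ₀ v ε f (-1))) s t
      = ζ * t + τ + ε * ((f (s + t) + f (s - t)) / 2) := by
  simp only [travelingWaves, deriv_plateauWave]
  ring

lemma deriv_plateauWave_sub : deriv (plateauWave N₁ τ ζ σ₀ v ε f 1)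
    - deriv (plateauWave N₁ τ ζ σ₀ v ε f (-1)) = fun s => ζ * (s - σ₀) + v := by
  ext s
  simp only [Pi.sub_apply, deriv_plateauWave]
  ring

lemma tendsto_deriv_deriv_plateauWave_sub : Tendsto (deriv (deriv (plateauWave N₁ τ ζ σ₀ v ε f 1)
    - deriv (plateauWave N₁ τ ζ σ₀ v ε f (-1)))) atTop (𝓝 ζ) := by
  rw [deriv_plateauWave_sub]
  refine tendsto_const_nhds.congr fun s => (HasDerivAt.deriv ?_).symm
  simpa using (((hasDerivAt_id s).sub_const σ₀).const_mul ζ).add_const v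

lemma stretch_plateauWave_of_mem {s t : ℝ} (hadd : s + t ∈ Metric.closedBall c f.rIn)
    (hsub : s - t ∈ Metric.closedBall c f.rIn) :
    travelingWaves (deriv (plateauWave N₁ τ ζ σ₀ v ε f 1))
      (deriv (plateauWave N₁ τ ζ σ₀ v ε f (-1))) s t = ζ * t + τ + ε := by
  rw [travelingWaves_deriv_plateauWave, f.one_of_mem_closedBall hadd, f.one_of_mem_closedBall hsub]
  ring

lemma tendsto_stretch_plateauWave (t : ℝ) :
    Tendsto (fun s => travelingWaves (deriv (plateauWave N₁ τ ζ σ₀ v ε f 1))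
      (deriv (plateauWave N₁ τ ζ σ₀ v ε f (-1))) s t) atTop (𝓝 (ζ * t + τ)) := by
  refine tendsto_const_nhds.congr' ?_
  filter_upwards [eventually_bump_add_eq_zero f t, eventually_bump_add_eq_zero f (-t)]
    with s hadd hsub
  rw [travelingWaves_deriv_plateauWave, hadd, sub_eq_add_neg, hsub]
  ring

variable {N₁ τ ζ σ₀ v ε f}

lemma uniformFront_zero : uniformFront N₁ τ ζ σ₀ v 0 = σ₀ := by simp [uniformFront]

lemma uniformFront_eq {t : ℝ} (ht : N₁ - τ - ζ * t ≠ 0) :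
    N₁ * σ₀ + (τ + ζ * t) * (uniformFront N₁ τ ζ σ₀ v t - σ₀) + v * t
      = N₁ * uniformFront N₁ τ ζ σ₀ v t := by
  rw [uniformFront]
  field_simp
  ring

lemma contDiffAt_uniformFront {n : WithTop ℕ∞} {t : ℝ} (ht : N₁ - τ - ζ * t ≠ 0) :
    ContDiffAt ℝ n (uniformFront N₁ τ ζ σ₀ v) t := by
  unfold uniformFront
  fun_prop (disch := exact ht)

lemma hasDerivAt_uniformFront {t : ℝ} (ht : N₁ - τ - ζ * t ≠ 0) :
    HasDerivAt (uniformFront N₁ τ ζ σ₀ v) (v * (N₁ - τ) / (N₁ - τ - ζ * t) ^ 2) t := by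
  refine ((((hasDerivAt_id t).const_mul v).div
    (((hasDerivAt_id t).const_mul ζ).const_sub (N₁ - τ)) ht).const_add σ₀).congr_deriv ?_
  simp only [id_eq]
  ring

lemma one_lt_deriv_uniformFront {t : ℝ} (hv : N₁ - τ < v) (hζt : 0 ≤ ζ * t)
    (ht : 0 < N₁ - τ - ζ * t) : 1 < deriv (uniformFront N₁ τ ζ σ₀ v) t := by
  rw [(hasDerivAt_uniformFront ht.ne').deriv, one_lt_div (pow_pos ht 2)]
  nlinarith

lemma uniformFront_le {t t' : ℝ} (hv : 0 ≤ v) (hζ : 0 ≤ ζ) (ht' : 0 ≤ t') (htt' : t ≤ t')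
    (hpos : 0 < N₁ - τ - ζ * t') : uniformFront N₁ τ ζ σ₀ v t ≤ uniformFront N₁ τ ζ σ₀ v t' := by
  unfold uniformFront
  gcongr

theorem isFrontedWave_plateauWave {η P T : ℝ} (hητ : η < τ) (hζ : 0 < ζ) (hv : N₁ - τ < v)
    (hε : 0 < ε) (hP : ζ * P + τ + ε = N₁)
    (hfar : uniformFront N₁ τ ζ σ₀ v P + P ≤ c - f.rOut) (hT : 0 < T) (hTP : T < P) :
    IsFrontedWave N₁ η τ ζ T (plateauWave N₁ τ ζ σ₀ v ε f 1) (plateauWave N₁ τ ζ σ₀ v ε f (-1))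
      (uniformFront N₁ τ ζ σ₀ v) := by
  have htime : ∀ t ∈ Icc 0 T, 0 ≤ ζ * t ∧ ζ * t < ζ * P := fun t ht =>
    ⟨mul_nonneg hζ.le ht.1, mul_lt_mul_of_pos_left (ht.2.trans_lt hTP) hζ⟩
  have hgap : ∀ t ∈ Icc 0 T, 0 < N₁ - τ - ζ * t := fun t ht => by linarith [htime t ht]
  refine ⟨hT, contDiff_plateauWave .., contDiff_plateauWave ..,
    fun t ht => contDiffAt_uniformFront (hgap t ht).ne', fun t ht => ?front,
    fun t ht => one_lt_deriv_uniformFront hv (htime t ht).1 (hgap t ht), ?stretch,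
    fun t _ => tendsto_stretch_plateauWave ..⟩
  case front =>
    have hle : uniformFront N₁ τ ζ σ₀ v t ≤ uniformFront N₁ τ ζ σ₀ v P :=
      uniformFront_le (by linarith [htime t ht]) hζ.le (hT.trans hTP).le
        (ht.2.trans hTP.le) (by linarith)
    rw [travelingWaves_plateauWave, bumpPrimitive_of_le f (by linarith [ht.2]),
      bumpPrimitive_of_le f (by linarith [ht.1]), ← uniformFront_eq (hgap t ht).ne']
    ring
  case stretch =>
    rintro ⟨s, t⟩ hp
    have hbump : ε * ((f (s + t) + f (s - t)) / 2) ∈ Icc 0 ε :=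
      ⟨mul_nonneg hε.le (by linarith [f.nonneg' (s + t), f.nonneg' (s - t)]),
        mul_le_of_le_one_right hε.le
          (by linarith [f.le_one (x := s + t), f.le_one (x := s - t)])⟩
    simp only [uc, travelingWaves_deriv_plateauWave]
    constructor <;> linarith [htime t hp.1, hbump.1, hbump.2]

lemma abs_plateauWave_data_sub_le {η T s s' : ℝ} (hε : 0 ≤ ε)
    (h : IsFrontedWave N₁ η τ ζ T (plateauWave N₁ τ ζ σ₀ v ε f 1)
      (plateauWave N₁ τ ζ σ₀ v ε f (-1)) (uniformFront N₁ τ ζ σ₀ v))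
    (hs : s ∈ Ici σ₀) (hs' : s' ∈ Ici σ₀) :
    |derivWithin (frontMotion N₁ (plateauWave N₁ τ ζ σ₀ v ε f 1)
          (plateauWave N₁ τ ζ σ₀ v ε f (-1)) (uniformFront N₁ τ ζ σ₀ v) · 0) (Ici σ₀) s - τ|
      + |frontVelocity (plateauWave N₁ τ ζ σ₀ v ε f 1)
          (plateauWave N₁ τ ζ σ₀ v ε f (-1)) (uniformFront N₁ τ ζ σ₀ v) s' 0
          - (ζ * (s' - σ₀) + v)| ≤ ε := by
  have hstretch := h.derivWithin_initial_motion uniformFront_zero hs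
  rw [travelingWaves_deriv_plateauWave] at hstretch
  have hvelocity := eqOn_frontVelocity_zero (F := plateauWave N₁ τ ζ σ₀ v ε f 1)
    (G := plateauWave N₁ τ ζ σ₀ v ε f (-1)) (uniformFront_zero (N₁ := N₁) (τ := τ) (ζ := ζ)
    (v := v)) hs'
  simp only [deriv_plateauWave_sub] at hvelocity
  rw [hstretch, hvelocity, sub_self, abs_zero, add_zero, mul_zero, zero_add, add_sub_cancel_left,
    add_zero, sub_zero, add_self_div_two, abs_of_nonneg (mul_nonneg hε f.nonneg)]
  exact mul_le_of_le_one_right hε f.le_one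

section Nonexistence

variable {η P T : ℝ} {χ₀ χ₁ N₀ σ : ℝ → ℝ} {χ N : ℝ → ℝ → ℝ}

/-- If the front had passed the centre of the bump, the front condition `χ (σ t) t = N₁ * σ t` at
time `P` would keep the support of the bump to the left of `uniformFront … P`. -/
lemma IsShockSolution.front_le_center_of_plateauWave_data
    (h : IsShockSolution N₁ η τ ζ σ₀ T χ₀ χ₁ N₀ χ N σ)
    (hχ₀ : EqOn χ₀ (plateauWave N₁ τ ζ σ₀ v ε f 1 + plateauWave N₁ τ ζ σ₀ v ε f (-1)) (Ici σ₀))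
    (hχ₁ : EqOn χ₁ (deriv (plateauWave N₁ τ ζ σ₀ v ε f 1)
      - deriv (plateauWave N₁ τ ζ σ₀ v ε f (-1))) (Ici σ₀))
    (hε : 0 < ε) (hP₀ : 0 < P) (hPT : P ≤ T) (hP : ζ * P + τ + ε = N₁)
    (hfar : uniformFront N₁ τ ζ σ₀ v P + P ≤ c - f.rOut) (hwide : P ≤ f.rIn) : σ P ≤ c := by
  by_contra! hc
  have hP_mem : P ∈ Icc 0 T := ⟨hP₀.le, hPT⟩
  have hmotion := h.eqOn_motion (hP₀.trans_le hPT)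
    ((contDiff_plateauWave ..).differentiable (by norm_num))
    ((contDiff_plateauWave ..).differentiable (by norm_num)) hχ₀ hχ₁
    (mem_Ereg.2 ⟨hP_mem, le_refl (σ P)⟩)
  have hfront : N₁ * σ P = N₁ * σ₀ + (τ + ζ * P) * (σ P - σ₀) + v * P
      + ε * ((bumpPrimitive f (σ P + P) + bumpPrimitive f (σ P - P)) / 2) :=
    (h.front P hP_mem).symm.trans (hmotion.trans (travelingWaves_plateauWave ..))
  have hbump : (bumpPrimitive f (σ P + P) + bumpPrimitive f (σ P - P)) / 2
      ≤ σ P - (c - f.rOut) := by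
    have hadd := bumpPrimitive_le f (s := σ P + P) (by linarith [f.rOut_pos])
    have hsub := bumpPrimitive_le f (s := σ P - P) (by linarith [f.rIn_lt_rOut])
    linarith
  have hgap : N₁ - τ - ζ * P = ε := by linarith
  have hunif := uniformFront_eq (σ₀ := σ₀) (v := v) (hgap.trans_ne hε.ne')
  have hlead : σ P - uniformFront N₁ τ ζ σ₀ v P
      = (bumpPrimitive f (σ P + P) + bumpPrimitive f (σ P - P)) / 2 :=
    mul_left_cancel₀ hε.ne' (by
      linear_combination hfront + hunif - (σ P - uniformFront N₁ τ ζ σ₀ v P) * hgap)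
  linarith

theorem not_isShockSolution_of_plateauWave_data
    (hχ₀ : EqOn χ₀ (plateauWave N₁ τ ζ σ₀ v ε f 1 + plateauWave N₁ τ ζ σ₀ v ε f (-1)) (Ici σ₀))
    (hχ₁ : EqOn χ₁ (deriv (plateauWave N₁ τ ζ σ₀ v ε f 1)
      - deriv (plateauWave N₁ τ ζ σ₀ v ε f (-1))) (Ici σ₀))
    (hε : 0 < ε) (hP₀ : 0 < P) (hPT : P ≤ T) (hP : ζ * P + τ + ε = N₁)
    (hfar : uniformFront N₁ τ ζ σ₀ v P + P ≤ c - f.rOut) (hwide : P ≤ f.rIn) :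
    ¬ IsShockSolution N₁ η τ ζ σ₀ T χ₀ χ₁ N₀ χ N σ := fun h => by
  have hmem : (c, P) ∈ Ereg σ T :=
    ⟨⟨hP₀.le, hPT⟩, h.front_le_center_of_plateauWave_data hχ₀ hχ₁ hε hP₀ hPT hP hfar hwide⟩
  have htension : N c P = ζ * P + τ + ε := (h.eqOn_tension (hP₀.trans_le hPT)
    ((contDiff_plateauWave ..).differentiable (by norm_num))
    ((contDiff_plateauWave ..).differentiable (by norm_num)) hχ₀ hχ₁ hmem).trans <|
    stretch_plateauWave_of_mem _ _ _ _ _ _ _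
      (by simpa [Real.dist_eq, abs_of_pos hP₀] using hwide)
      (by simpa [Real.dist_eq, abs_of_pos hP₀] using hwide)
  exact (h.N_lt (c, P) hmem).ne (htension.trans hP)

end Nonexistence

end Plateau
/-- Instability under unweighted `L^∞` perturbations (Section 4.2): for `ζ > 0` and every
sufficiently small `ε > 0` there are `R > σ₀` and classical shock front initial data
which is `ε`-close in `L^∞` to the piece-wise constant stretched data (i.e.
`sup |χ₀' - τ| + sup |χ₁ - (ζ(s-σ₀) + σ₁(N₁-τ))| ≤ ε`), yet the corresponding shock
solution has maximal existence time `T₊ = (N₁ - (τ+ε))/ζ < T(ζ)`, and on the material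
segments `[2R+t, 3R-t]` the stretch equals `ζ t + τ + ε`, reaching the inextensibility
threshold away from the shock front before the time `T(ζ)`. -/
theorem instability_unweighted_perturbations
    (N₁ η τ ζ σ₀ σ₁ : ℝ)
    (hN₁ : 0 < N₁) (hη : 0 < η) (hηN : η < N₁) (hτη : η < τ) (hτN : τ < N₁) (hζ : 0 < ζ)
    (hσ₀ : 0 < σ₀) (hσ₁ : 1 < σ₁) :
    ∃ ε₁ > (0 : ℝ), ∀ ε, 0 < ε → ε < ε₁ →
      ∃ R, σ₀ < R ∧ ∃ χ₀ χ₁ N₀ : ℝ → ℝ,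
        IsShockData N₁ η τ ζ σ₀ χ₀ χ₁ N₀ ∧
        (∀ s ∈ Ici σ₀, ∀ s' ∈ Ici σ₀,
          |derivWithin χ₀ (Ici σ₀) s - τ|
            + |χ₁ s' - (ζ * (s' - σ₀) + σ₁ * (N₁ - τ))| ≤ ε) ∧
        ∃ χ N : ℝ → ℝ → ℝ, ∃ σ : ℝ → ℝ,
          (∀ T, 0 < T → T < (N₁ - (τ + ε)) / ζ →
            IsShockSolution N₁ η τ ζ σ₀ T χ₀ χ₁ N₀ χ N σ) ∧
          (∀ T, (N₁ - (τ + ε)) / ζ ≤ T →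
            ¬ ∃ χ' N' : ℝ → ℝ → ℝ, ∃ σ' : ℝ → ℝ,
              IsShockSolution N₁ η τ ζ σ₀ T χ₀ χ₁ N₀ χ' N' σ') ∧
          ∀ t, 0 ≤ t → t ≤ (N₁ - (τ + ε)) / ζ →
            ∀ s, 2 * R + t ≤ s → s ≤ 3 * R - t →
              deriv (fun x => χ x t) s = ζ * t + τ + ε := by
  refine ⟨N₁ - τ, sub_pos.2 hτN, fun ε hε hετ => ?_⟩
  set P := (N₁ - (τ + ε)) / ζ with hP_def
  have hP₀ : 0 < P := div_pos (by linarith) hζ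
  have hP : ζ * P + τ + ε = N₁ := by rw [hP_def, mul_div_cancel₀ _ hζ.ne']; ring
  set v := σ₁ * (N₁ - τ)
  let σ := uniformFront N₁ τ ζ σ₀ v
  have hσ : ∀ t ≤ P, σ t ≤ σ P := fun t ht =>
    uniformFront_le (by nlinarith) hζ.le hP₀.le ht (by linarith)
  have hσP : σ₀ ≤ σ P := uniformFront_zero.symm.trans_le (hσ 0 hP₀.le)
  obtain ⟨R, hR, f, hrIn, hfar, hwide⟩ := exists_far_bump (hσ₀.trans_le hσP) hP₀.le
  have hwave : ∀ T, 0 < T → T < P → IsFrontedWave N₁ η τ ζ T (plateauWave N₁ τ ζ σ₀ v ε f 1)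
      (plateauWave N₁ τ ζ σ₀ v ε f (-1)) σ := fun T =>
    isFrontedWave_plateauWave hτη hζ (lt_mul_of_one_lt_left (sub_pos.2 hτN) hσ₁) hε hP hfar
  have hinitial := hwave (P / 2) (half_pos hP₀) (half_lt_self hP₀)
  refine ⟨R, by linarith, _, _, _, hinitial.isShockData uniformFront_zero hσ₀
      (tendsto_deriv_deriv_plateauWave_sub ..),
    fun s hs s' hs' => abs_plateauWave_data_sub_le hε.le hinitial hs hs', _, _, σ,
    fun T hT hTP => (hwave T hT hTP).isShockSolution uniformFront_zero,
    fun T hPT ⟨χ', N', σ', h⟩ => not_isShockSolution_of_plateauWave_data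
      (eqOn_frontMotion_zero uniformFront_zero) (eqOn_frontVelocity_zero uniformFront_zero)
      hε hP₀ hPT hP hfar hwide h,
    fun t ht htP s hs hs' => ?_⟩
  rw [deriv_frontMotion hinitial.differentiable_left hinitial.differentiable_right
    (by linarith [hσ t htP]), stretch_plateauWave_of_mem] <;>
    rw [Real.closedBall_eq_Icc] <;> constructor <;> linarith [hσ t htP]
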